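/- In the setting above, define the star product on Symb•[h] by a ⋆ b := Σ_{k=0}^{n+m} hᵏ [qⁿ(a) ∘ qᵐ(b)]^{n+m−k} for a ∈ Symbⁿ, b ∈ Symbᵐ, extended k[h]-bilinearly, where [·]ʲ = ζʲ(⌊·⌋ʲ) are truncated symbols. Then q_h(a ⋆ b) = q_h(a) ∘ q_h(b), where ∘ denotes the k[h]-bilinear extension of composition of differential operators. -/

import Mathlib

/-!
Statement 2 (Proposition 5.20(iii)): with an increasing filtration `Diffⁿ(E,F)` of
k-submodules of `Hom_k(E,F)`, symbol quotients `Symbⁿ = Diffⁿ/Diffⁿ⁻¹` with projections `ζⁿ`,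
and k-linear sections `qⁿ` of `ζⁿ`, the k-truncation `⌊Δ⌋ᵏ` of any `Δ ∈ Diffⁿ`
lies in `Diffᵏ` for every `k`.
-/

open Submodule
open scoped Classical DirectSum

variable {R : Type*} [CommRing R]

/-- `Diff⁻¹ := 0`; `Dprev D n` is `Diffⁿ⁻¹`. -/
def Dprev {M : Type*} [AddCommGroup M] [Module R M] (D : ℕ → Submodule R M) :
    ℕ → Submodule R M
  | 0 => ⊥
  | n + 1 => D n

/-- `Diffⁿ⁻¹` viewed as a submodule of `Diffⁿ`. -/
def Nsub {M : Type*} [AddCommGroup M] [Module R M] (D : ℕ → Submodule R M) (n : ℕ) :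
    Submodule R (D n) := (Dprev D n).comap (D n).subtype

/-- The symbol module `Symbⁿ := Diffⁿ/Diffⁿ⁻¹`; the symbol map `ζⁿ` is the quotient
projection `Submodule.Quotient.mk`. -/
abbrev Symb {M : Type*} [AddCommGroup M] [Module R M] (D : ℕ → Submodule R M) (n : ℕ) :=
  D n ⧸ Nsub D n

/-- The k-truncation `⌊Δ⌋ᵏ` of `Δ` regarded as a differential operator of order at most `n`:
`⌊Δ⌋ᵏ = Δ` for `k ≥ n` and `⌊Δ⌋ᵏ = ⌊Δ⌋ᵏ⁺¹ − qᵏ⁺¹(ζᵏ⁺¹(⌊Δ⌋ᵏ⁺¹))` for `k < n`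
(the inner `dite` is always taken in its first branch, by Proposition 5.20(iii)). -/
noncomputable def trunc {M : Type*} [AddCommGroup M] [Module R M] (D : ℕ → Submodule R M)
    (q : (n : ℕ) → Symb D n →ₗ[R] D n) (n : ℕ) (Δ : M) (k : ℕ) : M :=
  if n ≤ k then Δ
  else
    let t := trunc D q n Δ (k + 1)
    if h : t ∈ D (k + 1) then
      t - ((q (k + 1) (Submodule.Quotient.mk ⟨t, h⟩) : D (k + 1)) : M)
    else t
  termination_by n - k
  decreasing_by omega

/-- The truncated symbol `[Δ]ᵏ := ζᵏ(⌊Δ⌋ᵏ) ∈ Symbᵏ` (where `Δ` is regarded as an operator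
of order at most `n`); the `dite` is always taken in its first branch by Proposition 5.20(iii). -/
noncomputable def symbTrunc {M : Type*} [AddCommGroup M] [Module R M] (D : ℕ → Submodule R M)
    (q : (n : ℕ) → Symb D n →ₗ[R] D n) (n : ℕ) (Δ : M) (k : ℕ) : Symb D k :=
  if h : trunc D q n Δ k ∈ D k then
    (Submodule.Quotient.mk (⟨trunc D q n Δ k, h⟩ : D k) : Symb D k)
  else 0


variable {A : Type*} [Ring A] [Algebra R A]

/-- The formal h-deformed quantization `q_h : Symb•[h] → Diff[h]`, modelling `M[h] = M ⊗ k[h]`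
as `ℕ →₀ M` (the coefficient of `hⁱ` sitting in degree `i`):
`q_h(hⁱ σ) = hⁱ⁺ⁿ qⁿ(σ)` for `σ ∈ Symbⁿ`, extended k[h]-linearly. -/
noncomputable def qhF (D : ℕ → Submodule R A) (q : (n : ℕ) → Symb D n →ₗ[R] D n)
    (f : ℕ →₀ (⨁ n, Symb D n)) : ℕ →₀ A :=
  f.sum fun i x => x.sum fun n σ => Finsupp.single (i + n) ((q n σ : A))

/-- The convolution product on `Diff[h] = ℕ →₀ Diff`: the k[h]-bilinear extension of the
composition (multiplication) of differential operators. -/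
noncomputable def convMul (f g : ℕ →₀ A) : ℕ →₀ A :=
  f.sum fun i a => g.sum fun j b => Finsupp.single (i + j) (a * b)

/-- The formal star product `⋆` on `Symb•[h] = ℕ →₀ ⊕ⱼ Symbʲ`:
for `a ∈ Symbⁿ`, `b ∈ Symbᵐ`, `a ⋆ b := Σ_{k=0}^{n+m} hᵏ [qⁿ(a) ∘ qᵐ(b)]^{n+m−k}`,
extended k[h]-bilinearly. -/
noncomputable def starF (D : ℕ → Submodule R A) (q : (n : ℕ) → Symb D n →ₗ[R] D n)
    (x y : ℕ →₀ (⨁ n, Symb D n)) : ℕ →₀ (⨁ n, Symb D n) :=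
  x.sum fun i a => y.sum fun i' b =>
    a.sum fun n σ => b.sum fun m τ =>
      (Finset.range (n + m + 1)).sum fun k =>
        Finsupp.single (i + i' + k)
          (DirectSum.of (fun j => Symb D j) (n + m - k)
            (symbTrunc D q (n + m) ((q n σ : A) * (q m τ : A)) (n + m - k)))

section Truncation

variable {M : Type*} [AddCommGroup M] [Module R M] {D : ℕ → Submodule R M}
  {q : (n : ℕ) → Symb D n →ₗ[R] D n}

theorem trunc_of_le {n k : ℕ} (h : n ≤ k) (Δ : M) : trunc D q n Δ k = Δ := by
  rw [trunc, if_pos h]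

theorem trunc_of_lt {n k : ℕ} (h : k < n) {Δ : M} (hΔ : trunc D q n Δ (k + 1) ∈ D (k + 1)) :
    trunc D q n Δ k = trunc D q n Δ (k + 1) - (q (k + 1) (symbTrunc D q n Δ (k + 1)) : M) := by
  rw [trunc, if_neg h.not_ge, symbTrunc]
  simp only [dif_pos hΔ]

theorem sub_section_mem_Dprev
    (hq : ∀ (n : ℕ) (σ : Symb D n), (Submodule.Quotient.mk (q n σ) : Symb D n) = σ)
    (n : ℕ) (t : D n) : (t : M) - q n (Submodule.Quotient.mk t) ∈ Dprev D n := by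
  have h : t - q n (Submodule.Quotient.mk t) ∈ Nsub D n :=
    (Submodule.Quotient.eq _).1 (hq n _).symm
  exact h

theorem trunc_mem
    (hq : ∀ (n : ℕ) (σ : Symb D n), (Submodule.Quotient.mk (q n σ) : Symb D n) = σ)
    {n k : ℕ} (hk : k ≤ n) {Δ : M} (hΔ : Δ ∈ D n) : trunc D q n Δ k ∈ D k := by
  induction hk using Nat.decreasingInduction with
  | self => rwa [trunc_of_le le_rfl]
  | of_succ k hk ih =>
    rw [trunc_of_lt hk ih, symbTrunc, dif_pos ih]
    exact sub_section_mem_Dprev hq (k + 1) ⟨_, ih⟩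

/-- The quantized truncated symbols of degree at most `k` add up to the `k`-truncation. -/
theorem sum_section_symbTrunc
    (hq : ∀ (n : ℕ) (σ : Symb D n), (Submodule.Quotient.mk (q n σ) : Symb D n) = σ)
    {n k : ℕ} (hk : k ≤ n) {Δ : M} (hΔ : Δ ∈ D n) :
    ∑ j ∈ Finset.range (k + 1), (q j (symbTrunc D q n Δ j) : M) = trunc D q n Δ k := by
  induction k with
  | zero =>
    have h := trunc_mem hq hk hΔ
    have h0 := sub_section_mem_Dprev hq 0 ⟨_, h⟩
    rw [Finset.sum_range_one, symbTrunc, dif_pos h]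
    exact (sub_eq_zero.1 ((Submodule.mem_bot R).1 h0)).symm
  | succ k ih =>
    rw [Finset.sum_range_succ, ih (Nat.le_of_succ_le hk),
      trunc_of_lt hk (trunc_mem hq hk hΔ), sub_add_cancel]

end Truncation

/-- `qhF` as an additive homomorphism. -/
noncomputable def qhFHom (D : ℕ → Submodule R A) (q : (n : ℕ) → Symb D n →ₗ[R] D n) :
    (ℕ →₀ (⨁ n, Symb D n)) →+ (ℕ →₀ A) :=
  Finsupp.liftAddHom fun i => DFinsupp.sumAddHom fun n =>
    (Finsupp.singleAddHom (i + n)).comp ((D n).subtype.comp (q n)).toAddMonoidHom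

theorem qhFHom_apply (D : ℕ → Submodule R A) (q : (n : ℕ) → Symb D n →ₗ[R] D n)
    (f : ℕ →₀ (⨁ n, Symb D n)) : qhFHom D q f = qhF D q f := by
  simp only [qhFHom, qhF, Finsupp.liftAddHom_apply]
  exact Finset.sum_congr rfl fun i _ => DFinsupp.sumAddHom_apply _ _

theorem qhFHom_single_of (D : ℕ → Submodule R A) (q : (n : ℕ) → Symb D n →ₗ[R] D n)
    (i n : ℕ) (σ : Symb D n) :
    qhFHom D q (Finsupp.single i (DirectSum.of (fun j => Symb D j) n σ)) =
      Finsupp.single (i + n) (q n σ : A) := by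
  rw [qhFHom, Finsupp.liftAddHom_apply_single]
  exact DFinsupp.sumAddHom_single _ _ _

/-- `convMul` as a biadditive map. -/
noncomputable def convMulHom (A : Type*) [Ring A] : (ℕ →₀ A) →+ (ℕ →₀ A) →+ (ℕ →₀ A) :=
  Finsupp.liftAddHom fun i => AddMonoidHom.flip <| Finsupp.liftAddHom fun j =>
    AddMonoidHom.flip <|
      (AddMonoidHom.compHom (Finsupp.singleAddHom (i + j))).comp AddMonoidHom.mul

theorem convMulHom_apply (f g : ℕ →₀ A) : convMulHom A f g = convMul f g := by
  simp [convMulHom, convMul, Finsupp.liftAddHom_apply, Finsupp.sum]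

theorem convMulHom_single_single (i j : ℕ) (a b : A) :
    convMulHom A (Finsupp.single i a) (Finsupp.single j b) = Finsupp.single (i + j) (a * b) := by
  simp [convMulHom]

theorem qhFHom_sum_symbTrunc {D : ℕ → Submodule R A} {q : (n : ℕ) → Symb D n →ₗ[R] D n}
    (hq : ∀ (n : ℕ) (σ : Symb D n), (Submodule.Quotient.mk (q n σ) : Symb D n) = σ)
    (i n : ℕ) {Δ : A} (hΔ : Δ ∈ D n) :
    qhFHom D q (∑ k ∈ Finset.range (n + 1), Finsupp.single (i + k)
      (DirectSum.of (fun j => Symb D j) (n - k) (symbTrunc D q n Δ (n - k)))) =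
      Finsupp.single (i + n) Δ := by
  calc
    _ = ∑ k ∈ Finset.range (n + 1),
        Finsupp.single (i + n) (q (n - k) (symbTrunc D q n Δ (n - k)) : A) := by
      rw [map_sum]
      refine Finset.sum_congr rfl fun k hk => ?_
      have hk' : i + k + (n - k) = i + n := by grind
      rw [qhFHom_single_of, hk']
    _ = Finsupp.single (i + n) Δ := by
      have h : ∑ k ∈ Finset.range (n + 1), (q (n - k) (symbTrunc D q n Δ (n - k)) : A) =
          ∑ j ∈ Finset.range (n + 1), (q j (symbTrunc D q n Δ j) : A) :=
        Finset.sum_range_reflect (fun j => (q j (symbTrunc D q n Δ j) : A)) (n + 1)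
      rw [← Finsupp.single_finsetSum, h,
        sum_section_symbTrunc hq le_rfl hΔ, trunc_of_le le_rfl]

/-!
Statement 8 (Lemma 5.31(ii)): `q_h(a ⋆ b) = q_h(a) ∘ q_h(b)`, where `⋆` is the formal star
product (`a ⋆ b = Σ_{k=0}^{n+m} hᵏ [qⁿ(a)∘qᵐ(b)]^{n+m−k}` on homogeneous symbols, extended
k[h]-bilinearly) and `∘` is the k[h]-bilinear extension (convolution) of composition of
differential operators.
-/
theorem statement_8 (D : ℕ → Submodule R A) (hmono : Monotone D)
    (hone : (1 : A) ∈ D 0)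
    (hmul : ∀ ⦃n m : ℕ⦄ ⦃x y : A⦄, x ∈ D n → y ∈ D m → x * y ∈ D (n + m))
    (q : (n : ℕ) → Symb D n →ₗ[R] D n)
    (hq : ∀ (n : ℕ) (σ : Symb D n), (Submodule.Quotient.mk (q n σ) : Symb D n) = σ) :
    ∀ x y : ℕ →₀ (⨁ n, Symb D n),
      qhF D q (starF D q x y) = convMul (qhF D q x) (qhF D q y) := by
  intro x y
  rw [← qhFHom_apply, ← convMulHom_apply]
  simp only [starF, qhF, Finsupp.sum, DFinsupp.sum, map_sum (convMulHom A),
    map_sum (convMulHom A _), AddMonoidHom.finsetSum_apply, convMulHom_single_single]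
  rw [map_sum]
  refine Finset.sum_congr rfl fun i _ => ?_
  conv_rhs => rw [Finset.sum_comm]
  rw [map_sum]
  refine Finset.sum_congr rfl fun i' _ => ?_
  rw [map_sum]
  refine Finset.sum_congr rfl fun n _ => ?_
  rw [map_sum]
  refine Finset.sum_congr rfl fun m _ => ?_
  rw [qhFHom_sum_symbTrunc hq _ _ (hmul (q n _).2 (q m _).2), add_add_add_comm]
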